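/- (Necessary condition, no movers, first difference) Under the IV assumptions (Independence, Relevance, Monotonicity, Exclusion), it holds that ΔE[D∨ − D2 | Z] = μ({C1,N2}) − μ({A1,C2}); in particular this quantity equals zero whenever μ({C1,N2}) = μ({A1,C2}). (Proposition 2, eq. (9)) -/

import Mathlib

open MeasureTheory ProbabilityTheory

noncomputable section

variable {Ω : Type*} [MeasurableSpace Ω]

/-- Observed first-part treatment: `D1 = D1(1)·Z + D1(0)·(1−Z)`. -/
def obsD1 (Z : Ω → ℝ) (D1 : Bool → Ω → ℝ) (ω : Ω) : ℝ :=
  D1 true ω * Z ω + D1 false ω * (1 - Z ω)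

/-- Observed second-part treatment. -/
def obsD2 (Z : Ω → ℝ) (D1 : Bool → Ω → ℝ) (D2 : Bool → Bool → Ω → ℝ) (ω : Ω) : ℝ :=
  (D2 true true ω * obsD1 Z D1 ω + D2 true false ω * (1 - obsD1 Z D1 ω)) * Z ω +
  (D2 false true ω * obsD1 Z D1 ω + D2 false false ω * (1 - obsD1 Z D1 ω)) * (1 - Z ω)

/-- Summary treatment `D∧ = D1·D2`. -/
def obsDand (Z : Ω → ℝ) (D1 : Bool → Ω → ℝ) (D2 : Bool → Bool → Ω → ℝ) (ω : Ω) : ℝ :=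
  obsD1 Z D1 ω * obsD2 Z D1 D2 ω

/-- Summary treatment `D∨ = D1 + D2 − D1·D2`. -/
def obsDor (Z : Ω → ℝ) (D1 : Bool → Ω → ℝ) (D2 : Bool → Bool → Ω → ℝ) (ω : Ω) : ℝ :=
  obsD1 Z D1 ω + obsD2 Z D1 D2 ω - obsD1 Z D1 ω * obsD2 Z D1 D2 ω

/-- Observed outcome `Y = Σ_{d1,d2} Y(Z,d1,d2)·1{D1=d1, D2=d2}`, written out using that the
observed treatments and the instrument are {0,1}-valued. The first index of `Yp` is `z`, the
second is `d1`, the third is `d2`. -/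
def obsY (Z : Ω → ℝ) (D1 : Bool → Ω → ℝ) (D2 : Bool → Bool → Ω → ℝ)
    (Yp : Bool → Bool → Bool → Ω → ℝ) (ω : Ω) : ℝ :=
  (Yp true true true ω * obsD1 Z D1 ω * obsD2 Z D1 D2 ω +
   Yp true false true ω * (1 - obsD1 Z D1 ω) * obsD2 Z D1 D2 ω +
   Yp true true false ω * obsD1 Z D1 ω * (1 - obsD2 Z D1 D2 ω) +
   Yp true false false ω * (1 - obsD1 Z D1 ω) * (1 - obsD2 Z D1 D2 ω)) * Z ω +
  (Yp false true true ω * obsD1 Z D1 ω * obsD2 Z D1 D2 ω +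
   Yp false false true ω * (1 - obsD1 Z D1 ω) * obsD2 Z D1 D2 ω +
   Yp false true false ω * obsD1 Z D1 ω * (1 - obsD2 Z D1 D2 ω) +
   Yp false false false ω * (1 - obsD1 Z D1 ω) * (1 - obsD2 Z D1 D2 ω)) * (1 - Z ω)

/-- `ΔE[A|Z] := E[A | Z = 1] − E[A | Z = 0]`, expectations under conditional measures. -/
def dE (μ : Measure Ω) (Z A : Ω → ℝ) : ℝ :=
  (∫ ω, A ω ∂(μ[|Z ⁻¹' {1}])) - (∫ ω, A ω ∂(μ[|Z ⁻¹' {0}]))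

/-- The full-complier event `{C1,C2}`. -/
def CCev (D1 : Bool → Ω → ℝ) (D2 : Bool → Bool → Ω → ℝ) : Set Ω :=
  {ω | D1 true ω - D1 false ω = 1 ∧ D2 true true ω - D2 false false ω = 1}

/-- The mover event `{C1,N2}`. -/
def CNev (D1 : Bool → Ω → ℝ) (D2 : Bool → Bool → Ω → ℝ) : Set Ω :=
  {ω | D1 true ω - D1 false ω = 1 ∧ D2 true true ω = 0 ∧ D2 false false ω = 0}

/-- The mover event `{C1,A2}`. -/
def CAev (D1 : Bool → Ω → ℝ) (D2 : Bool → Bool → Ω → ℝ) : Set Ω :=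
  {ω | D1 true ω - D1 false ω = 1 ∧ D2 true true ω = 1 ∧ D2 false false ω = 1}

/-- The mover event `{N1,C2}`. -/
def NCev (D1 : Bool → Ω → ℝ) (D2 : Bool → Bool → Ω → ℝ) : Set Ω :=
  {ω | D1 true ω = 0 ∧ D1 false ω = 0 ∧ D2 true false ω - D2 false false ω = 1}

/-- The mover event `{A1,C2}`. -/
def ACev (D1 : Bool → Ω → ℝ) (D2 : Bool → Bool → Ω → ℝ) : Set Ω :=
  {ω | D1 true ω = 1 ∧ D1 false ω = 1 ∧ D2 true true ω - D2 false true ω = 1}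

/-!
Let `F z` be the event that a unit assigned `z` takes the first treatment but not the second.
Pointwise `D∨ − D2 = D1 (1 − D2)`, so on `{Z = z}` it is the indicator of `F z`, and independence
gives `ΔE[D∨ − D2 | Z] = μ (F 1) − μ (F 0) = μ (F 1 \ F 0) − μ (F 0 \ F 1)`. Monotonicity of the
second treatment makes `F 1 \ F 0` the event `{C1,N2}`, monotonicity of the first makes
`F 0 \ F 1` the event `{A1,C2}`.
-/

lemma integral_cond_preimage_of_indepFun {𝓧 𝓩 E : Type*} [MeasurableSpace 𝓧] [MeasurableSpace 𝓩]
    [NormedAddCommGroup E] [NormedSpace ℝ E] {μ : Measure Ω} [IsFiniteMeasure μ]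
    {X : Ω → 𝓧} {Z : Ω → 𝓩} {f : 𝓧 → E} {s : Set 𝓩} (hXZ : IndepFun X Z μ)
    (hX : AEMeasurable X μ) (hZ : Measurable Z) (hf : AEStronglyMeasurable f (μ.map X))
    (hs : MeasurableSet s) (hμs : μ (Z ⁻¹' s) ≠ 0) :
    ∫ ω, f (X ω) ∂μ[|Z ⁻¹' s] = ∫ ω, f (X ω) ∂μ := by
  have hμs' : μ.real (Z ⁻¹' s) ≠ 0 := (measureReal_ne_zero_iff).2 hμs
  rw [ProbabilityTheory.cond, integral_smul_measure,
    Indep.setIntegral_eq_smul hZ.comap_le hXZ.symm hX ⟨s, hs, rfl⟩ hf, ENNReal.toReal_inv,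
    ← measureReal_def, inv_smul_smul₀ hμs']

lemma dE_eq_integral_sub_of_indepFun {μ : Measure Ω} [IsFiniteMeasure μ] {Z A U₁ U₀ : Ω → ℝ}
    (hZ : Measurable Z) (hZ1 : μ (Z ⁻¹' {1}) ≠ 0) (hZ0 : μ (Z ⁻¹' {0}) ≠ 0)
    (hU₁ : AEMeasurable U₁ μ) (hU₀ : AEMeasurable U₀ μ)
    (hU₁Z : IndepFun U₁ Z μ) (hU₀Z : IndepFun U₀ Z μ)
    (hA₁ : ∀ ω, Z ω = 1 → A ω = U₁ ω) (hA₀ : ∀ ω, Z ω = 0 → A ω = U₀ ω) :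
    dE μ Z A = ∫ ω, U₁ ω ∂μ - ∫ ω, U₀ ω ∂μ := by
  have integral_cond_eq {z : ℝ} {U : Ω → ℝ} (hz : μ (Z ⁻¹' {z}) ≠ 0) (hU : AEMeasurable U μ)
      (hUZ : IndepFun U Z μ) (hA : ∀ ω, Z ω = z → A ω = U ω) :
      ∫ ω, A ω ∂μ[|Z ⁻¹' {z}] = ∫ ω, U ω ∂μ :=
    calc ∫ ω, A ω ∂μ[|Z ⁻¹' {z}]
      _ = ∫ ω, U ω ∂μ[|Z ⁻¹' {z}] :=
        integral_congr_ae (ae_cond_of_forall_mem (hZ (measurableSet_singleton z)) hA)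
      _ = ∫ ω, U ω ∂μ :=
        integral_cond_preimage_of_indepFun (f := id) hUZ hU hZ aestronglyMeasurable_id
          (measurableSet_singleton z) hz
  rw [dE, integral_cond_eq hZ1 hU₁ hU₁Z hA₁, integral_cond_eq hZ0 hU₀ hU₀Z hA₀]

lemma measureReal_sub_eq_sdiff_sub_sdiff {μ : Measure Ω} [IsFiniteMeasure μ] {s t : Set Ω}
    (hs : MeasurableSet s) (ht : MeasurableSet t) :
    μ.real s - μ.real t = μ.real (s \ t) - μ.real (t \ s) := by
  rw [← measureReal_inter_add_sdiff (s := s) ht, ← measureReal_inter_add_sdiff (s := t) hs,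
    Set.inter_comm t s, add_sub_add_left_eq_sub]

lemma measure_preimage_zero_ne_zero_of_binary {μ : Measure Ω} [IsProbabilityMeasure μ] {Z : Ω → ℝ}
    (hZ : Measurable Z) (hZ01 : ∀ ω, Z ω = 0 ∨ Z ω = 1) (hZ1 : μ (Z ⁻¹' {1}) < 1) :
    μ (Z ⁻¹' {0}) ≠ 0 := by
  have compl_preimage_one : (Z ⁻¹' {1})ᶜ = Z ⁻¹' {0} := by
    ext ω
    rcases hZ01 ω with h | h <;> simp [h]
  rw [← compl_preimage_one, Ne, prob_compl_eq_zero_iff (hZ (measurableSet_singleton 1))]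
  exact hZ1.ne

lemma eq_one_and_eq_zero_of_sub_eq_one {x y : ℝ} (hx : x = 0 ∨ x = 1) (hy : y = 0 ∨ y = 1)
    (hxy : x - y = 1) : x = 1 ∧ y = 0 := by
  rcases hx with rfl | rfl <;> rcases hy with rfl | rfl <;> constructor <;> linarith

/-- The event that, under instrument value `z`, a unit takes the first treatment but not the
second. Its indicator is the potential version of `D∨ − D2`. The second treatment enters only at
`d1 = true` because `D1(z) = 1` on this event. -/
def firstOnlyEv {Ω : Type*} (D1 : Bool → Ω → ℝ) (D2 : Bool → Bool → Ω → ℝ) (z : Bool) : Set Ω :=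
  {ω | D1 z ω = 1 ∧ D2 z true ω = 0}

section Potential

variable {Ω : Type*} {Z : Ω → ℝ} {D1 : Bool → Ω → ℝ} {D2 : Bool → Bool → Ω → ℝ} {ω : Ω} {z : Bool}

lemma obsD1_eq_potential (hZ : Z ω = if z then 1 else 0) : obsD1 Z D1 ω = D1 z ω := by
  cases z <;> simp [obsD1, hZ]

lemma obsD2_eq_potential (hZ : Z ω = if z then 1 else 0) :
    obsD2 Z D1 D2 ω = D2 z true ω * D1 z ω + D2 z false ω * (1 - D1 z ω) := by
  cases z <;> simp [obsD2, obsD1_eq_potential hZ, hZ]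

lemma obsDor_sub_obsD2_eq_indicator_firstOnlyEv
    (hZ : Z ω = if z then 1 else 0) (hD1 : D1 z ω = 0 ∨ D1 z ω = 1)
    (hD2 : D2 z true ω = 0 ∨ D2 z true ω = 1) :
    obsDor Z D1 D2 ω - obsD2 Z D1 D2 ω = (firstOnlyEv D1 D2 z).indicator 1 ω := by
  rw [obsDor, obsD1_eq_potential hZ, obsD2_eq_potential hZ]
  rcases hD1 with h1 | h1 <;> rcases hD2 with h2 | h2 <;> simp [firstOnlyEv, h1, h2]

end Potential

section FirstOnly

variable {μ : Measure Ω} {Z : Ω → ℝ} {D1 : Bool → Ω → ℝ} {D2 : Bool → Bool → Ω → ℝ}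

lemma measurableSet_firstOnlyEv {z : Bool} (hD1 : Measurable (D1 z))
    (hD2 : Measurable (D2 z true)) : MeasurableSet (firstOnlyEv D1 D2 z) :=
  (hD1 (measurableSet_singleton 1)).inter (hD2 (measurableSet_singleton 0))

lemma indepFun_indicator_firstOnlyEv {z : Bool}
    (h : IndepFun (fun ω ↦ (D1 z ω, D2 z true ω)) Z μ) :
    IndepFun ((firstOnlyEv D1 D2 z).indicator (1 : Ω → ℝ)) Z μ := by
  have hs : MeasurableSet {p : ℝ × ℝ | p.1 = 1 ∧ p.2 = 0} :=
    (measurable_fst (measurableSet_singleton 1)).inter (measurable_snd (measurableSet_singleton 0))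
  exact h.comp (measurable_one.indicator hs) measurable_id

lemma dE_obsDor_sub_obsD2_eq_measureReal_sub [IsFiniteMeasure μ] (hZ : Measurable Z)
    (hZ1 : μ (Z ⁻¹' {1}) ≠ 0) (hZ0 : μ (Z ⁻¹' {0}) ≠ 0)
    (hD1 : ∀ z, Measurable (D1 z)) (hD2 : ∀ z, Measurable (D2 z true))
    (hD101 : ∀ z ω, D1 z ω = 0 ∨ D1 z ω = 1)
    (hD201 : ∀ z ω, D2 z true ω = 0 ∨ D2 z true ω = 1)
    (hindep : ∀ z, IndepFun (fun ω ↦ (D1 z ω, D2 z true ω)) Z μ) :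
    dE μ Z (fun ω ↦ obsDor Z D1 D2 ω - obsD2 Z D1 D2 ω) =
      μ.real (firstOnlyEv D1 D2 true) - μ.real (firstOnlyEv D1 D2 false) := by
  have hmeas (z : Bool) : MeasurableSet (firstOnlyEv D1 D2 z) :=
    measurableSet_firstOnlyEv (hD1 z) (hD2 z)
  have hU (z : Bool) : AEMeasurable ((firstOnlyEv D1 D2 z).indicator (1 : Ω → ℝ)) μ :=
    (measurable_one.indicator (hmeas z)).aemeasurable
  have hobs (z : Bool) (ω : Ω) (h : Z ω = if z then 1 else 0) :
      obsDor Z D1 D2 ω - obsD2 Z D1 D2 ω = (firstOnlyEv D1 D2 z).indicator 1 ω :=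
    obsDor_sub_obsD2_eq_indicator_firstOnlyEv h (hD101 z ω) (hD201 z ω)
  rw [dE_eq_integral_sub_of_indepFun hZ hZ1 hZ0 (hU true) (hU false)
    (indepFun_indicator_firstOnlyEv (hindep true)) (indepFun_indicator_firstOnlyEv (hindep false))
    (hobs true) (hobs false), integral_indicator_one (hmeas true),
    integral_indicator_one (hmeas false)]

lemma firstOnlyEv_true_sdiff_false_ae_eq_CNev (hD101 : ∀ z ω, D1 z ω = 0 ∨ D1 z ω = 1)
    (hD201 : ∀ d ω, D2 false d ω = 0 ∨ D2 false d ω = 1)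
    (hmono2 : ∀ᵐ ω ∂μ,
      D2 false true ω * D1 false ω + D2 false false ω * (1 - D1 false ω) ≤
        D2 true true ω * D1 true ω + D2 true false ω * (1 - D1 true ω)) :
    (firstOnlyEv D1 D2 true \ firstOnlyEv D1 D2 false : Set Ω) =ᵐ[μ] CNev D1 D2 := by
  rw [Filter.eventuallyEq_set]
  filter_upwards [hmono2] with ω h2
  simp only [firstOnlyEv, CNev, Set.mem_sdiff, Set.mem_ofPred_eq]
  constructor
  · rintro ⟨⟨hD1t, hD2t⟩, hnot⟩
    rw [hD1t, hD2t] at h2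
    rcases hD101 false ω with hD1f | hD1f
    · have hD2f : D2 false false ω = 0 :=
        (hD201 false ω).resolve_right fun h ↦ by norm_num [hD1f, h] at h2
      simp [hD1t, hD1f, hD2t, hD2f]
    · have hD2f : D2 false true ω = 0 :=
        (hD201 true ω).resolve_right fun h ↦ by norm_num [hD1f, h] at h2
      exact absurd ⟨hD1f, hD2f⟩ hnot
  · rintro ⟨hD1, hD2t, -⟩
    obtain ⟨hD1t, hD1f⟩ :=
      eq_one_and_eq_zero_of_sub_eq_one (hD101 true ω) (hD101 false ω) hD1
    simp [hD1t, hD1f, hD2t]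

lemma firstOnlyEv_false_sdiff_true_ae_eq_ACev (hD101 : ∀ ω, D1 true ω = 0 ∨ D1 true ω = 1)
    (hD201 : ∀ z ω, D2 z true ω = 0 ∨ D2 z true ω = 1)
    (hmono1 : ∀ᵐ ω ∂μ, D1 false ω ≤ D1 true ω) :
    (firstOnlyEv D1 D2 false \ firstOnlyEv D1 D2 true : Set Ω) =ᵐ[μ] ACev D1 D2 := by
  rw [Filter.eventuallyEq_set]
  filter_upwards [hmono1] with ω h1
  simp only [firstOnlyEv, ACev, Set.mem_sdiff, Set.mem_ofPred_eq]
  constructor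
  · rintro ⟨⟨hD1f, hD2f⟩, hnot⟩
    have hD1t : D1 true ω = 1 := (hD101 ω).resolve_left fun h ↦ by norm_num [hD1f, h] at h1
    have hD2t : D2 true true ω = 1 := (hD201 true ω).resolve_left fun h ↦ hnot ⟨hD1t, h⟩
    simp [hD1t, hD1f, hD2t, hD2f]
  · rintro ⟨-, hD1f, hD2⟩
    obtain ⟨hD2t, hD2f⟩ :=
      eq_one_and_eq_zero_of_sub_eq_one (hD201 true ω) (hD201 false ω) hD2
    simp [hD1f, hD2t, hD2f]

end FirstOnly

theorem stmt_15_general {μ : Measure Ω} [IsFiniteMeasure μ]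
    {Z : Ω → ℝ} {D1 : Bool → Ω → ℝ} {D2 : Bool → Bool → Ω → ℝ}
    (hZ : Measurable Z) (hZ1 : μ (Z ⁻¹' {1}) ≠ 0) (hZ0 : μ (Z ⁻¹' {0}) ≠ 0)
    (hD1 : ∀ z, Measurable (D1 z)) (hD2 : ∀ z, Measurable (D2 z true))
    (hD101 : ∀ z ω, D1 z ω = 0 ∨ D1 z ω = 1)
    (hD201 : ∀ z d ω, D2 z d ω = 0 ∨ D2 z d ω = 1)
    (hindep : ∀ z, IndepFun (fun ω ↦ (D1 z ω, D2 z true ω)) Z μ)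
    (hmono1 : ∀ᵐ ω ∂μ, D1 false ω ≤ D1 true ω)
    (hmono2 : ∀ᵐ ω ∂μ,
      D2 false true ω * D1 false ω + D2 false false ω * (1 - D1 false ω) ≤
        D2 true true ω * D1 true ω + D2 true false ω * (1 - D1 true ω)) :
    dE μ Z (fun ω ↦ obsDor Z D1 D2 ω - obsD2 Z D1 D2 ω) =
      μ.real (CNev D1 D2) - μ.real (ACev D1 D2) := by
  have hD201_true (z : Bool) (ω : Ω) : D2 z true ω = 0 ∨ D2 z true ω = 1 := hD201 z true ω
  have hmeas (z : Bool) : MeasurableSet (firstOnlyEv D1 D2 z) :=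
    measurableSet_firstOnlyEv (hD1 z) (hD2 z)
  calc dE μ Z (fun ω ↦ obsDor Z D1 D2 ω - obsD2 Z D1 D2 ω)
    _ = μ.real (firstOnlyEv D1 D2 true) - μ.real (firstOnlyEv D1 D2 false) :=
      dE_obsDor_sub_obsD2_eq_measureReal_sub hZ hZ1 hZ0 hD1 hD2 hD101 hD201_true hindep
    _ = μ.real (firstOnlyEv D1 D2 true \ firstOnlyEv D1 D2 false) -
          μ.real (firstOnlyEv D1 D2 false \ firstOnlyEv D1 D2 true) :=
      measureReal_sub_eq_sdiff_sub_sdiff (hmeas true) (hmeas false)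
    _ = μ.real (CNev D1 D2) - μ.real (ACev D1 D2) := by
      rw [measureReal_congr (firstOnlyEv_true_sdiff_false_ae_eq_CNev hD101 (hD201 false) hmono2),
        measureReal_congr
          (firstOnlyEv_false_sdiff_true_ae_eq_ACev (hD101 true) hD201_true hmono1)]

theorem stmt_15
    (μ : Measure Ω) [IsProbabilityMeasure μ]
    (Z : Ω → ℝ) (D1 : Bool → Ω → ℝ) (D2 : Bool → Bool → Ω → ℝ)
    (Yp : Bool → Bool → Bool → Ω → ℝ)
    (hZmeas : Measurable Z)
    (hD1meas : ∀ b, Measurable (D1 b))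
    (hD2meas : ∀ b b', Measurable (D2 b b'))
    (hYmeas : ∀ z d1 d2, Measurable (Yp z d1 d2))
    (hYint : ∀ z d1 d2, Integrable (Yp z d1 d2) μ)
    (hZ01 : ∀ ω, Z ω = 0 ∨ Z ω = 1)
    (hZpos : 0 < μ (Z ⁻¹' {1})) (hZlt : μ (Z ⁻¹' {1}) < 1)
    (hD101 : ∀ b ω, D1 b ω = 0 ∨ D1 b ω = 1)
    (hD201 : ∀ b b' ω, D2 b b' ω = 0 ∨ D2 b b' ω = 1)
    (hindep : IndepFun
      (fun ω => ((fun b => D1 b ω), (fun b b' => D2 b b' ω), (fun z d1 d2 => Yp z d1 d2 ω))) Z μ)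
    (hrel1 : 0 < dE μ Z (obsD1 Z D1))
    (hrel2 : 0 < dE μ Z (obsD2 Z D1 D2))
    (hrelAnd : 0 < dE μ Z (obsDand Z D1 D2))
    (hrelOr : 0 < dE μ Z (obsDor Z D1 D2))
    (hmono1 : ∀ᵐ ω ∂μ, D1 false ω ≤ D1 true ω)
    (hmono2 : ∀ᵐ ω ∂μ,
      D2 false true ω * D1 false ω + D2 false false ω * (1 - D1 false ω) ≤
        D2 true true ω * D1 true ω + D2 true false ω * (1 - D1 true ω))
    (hexcl : ∀ d1 d2, ∀ᵐ ω ∂μ, Yp true d1 d2 ω = Yp false d1 d2 ω) :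
    dE μ Z (fun ω => obsDor Z D1 D2 ω - obsD2 Z D1 D2 ω) =
      (μ (CNev D1 D2)).toReal - (μ (ACev D1 D2)).toReal ∧
    (μ (CNev D1 D2) = μ (ACev D1 D2) →
      dE μ Z (fun ω => obsDor Z D1 D2 ω - obsD2 Z D1 D2 ω) = 0) := by
  have hdE := stmt_15_general hZmeas hZpos.ne'
    (measure_preimage_zero_ne_zero_of_binary hZmeas hZ01 hZlt) hD1meas
    (fun z ↦ hD2meas z true) hD101 hD201
    (fun z ↦ hindep.comp (φ := fun p ↦ (p.1 z, p.2.1 z true)) (by fun_prop) measurable_id)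
    hmono1 hmono2
  exact ⟨hdE, fun h ↦ by rw [hdE, measureReal_def, h, measureReal_def, sub_self]⟩
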